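/- For any α ∈ [0,1] and any n ≥ 1 for which the (n+2)-th step of Shulga's algorithm applied to α is defined, the Shulga sequences satisfy b_{n+2} ≥ b_n + 1. -/

import Mathlib

/-!
Write `p n`, `q n` for the denominators of `[0; b₁, …, bₙ]` and `[0; c₁, …, cₙ]`. The sign of the
error `α - [0; b₁, …, bₙ] - [0; c₁, …, cₙ]` alternates with `n`, and its size `δₙ` satisfies
`δₙ * q n * (q n + q (n - 1)) < 1`. Since `p n ≤ q n`, the number `α - [0; c₁, …, cₙ]` is close
enough to `[0; b₁, …, bₙ]`, and on the correct side of it, for its expansion to begin with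
`b₁, …, bₙ`; so `b (n + 1)` can be read off from `δₙ`, and similarly for `c (n + 1)`. These facts
are carried along the algorithm by induction (`ShulgaInv`, `shulga_step`), and each step leaves
three inequalities that no longer mention `α` (`StepIneq`).

The rest is arithmetic with these inequalities. Abbreviate `b = b (n + 1)`, `c = c (n + 1)`. For
`n ≥ 1` one gets `c ≥ b + 1` (`c_ge_succ_b`), and this yields `b (n + 2) ≥ b (n + 1)`
(`b_mono_arith`). So `b (n + 2) ≥ b n + 1` is clear unless `b (n + 1) = b n`. In that case, if the
common value is at least `3`, then `c ≥ b + 2` and `b (n + 2) ≥ b + 1` (`b_strict_arith`). The common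
value `2` can only occur for `n = 1`, where the inequalities force `c₁ = 2` and `b₃ ≥ 3`.
-/

noncomputable section

namespace ShulgaPaper

open Filter Topology

/-- The value of the finite continued fraction `[0; a₁, …, aₙ]`
(the empty continued fraction has value `0`). -/
def cf : List ℕ → ℝ
  | [] => 0
  | a :: l => 1 / ((a : ℝ) + cf l)

/-- Iterates of the Gauss map, starting from the fractional part of `x`. -/
def gaussIter (x : ℝ) : ℕ → ℝ
  | 0 => Int.fract x
  | n + 1 => Int.fract (1 / gaussIter x n)

/-- The `n`-th partial quotient `aₙ(x)` of the continued fraction expansion of `x`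
(for `n ≥ 1`; a junk value is returned if it is undefined). -/
def pq (x : ℝ) (n : ℕ) : ℕ := ⌊1 / gaussIter x (n - 1)⌋₊

/-- The `n`-th partial quotient `aₙ(x)` of `x` is defined (`n ≥ 1`), i.e. `n` does not
exceed the length of the continued fraction expansion of `x`. -/
def pqDefined (x : ℝ) (n : ℕ) : Prop := gaussIter x (n - 1) ≠ 0

/-- The set `G` of real numbers that are rational or whose partial quotients diverge. -/
def G : Set ℝ :=
  {x | (∃ q : ℚ, x = (q : ℝ)) ∨ Tendsto (fun n => pq x n) atTop atTop}

/-- The list of pairs `(b_k, c_k)`, `k = 1, …, n`, produced by (a totalized version of)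
Shulga's algorithm applied to `α`. -/
def shulgaList (α : ℝ) : ℕ → List (ℕ × ℕ)
  | 0 => []
  | n + 1 =>
      let L := shulgaList α n
      let b := pq (α - cf (L.map Prod.snd)) (n + 1) + 1
      let c := pq (α - cf (L.map Prod.fst ++ [b])) (n + 1)
      L ++ [(b, c)]

/-- The list `[b₁, …, bₙ]` of Shulga's algorithm applied to `α`. -/
def bList (α : ℝ) (n : ℕ) : List ℕ := (shulgaList α n).map Prod.fst

/-- The list `[c₁, …, cₙ]` of Shulga's algorithm applied to `α`. -/
def cList (α : ℝ) (n : ℕ) : List ℕ := (shulgaList α n).map Prod.snd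

/-- `bₙ` of Shulga's algorithm applied to `α` (for `n ≥ 1`). -/
def shulgaB (α : ℝ) (n : ℕ) : ℕ := ((shulgaList α n).getLast?.getD (0, 0)).1

/-- `cₙ` of Shulga's algorithm applied to `α` (for `n ≥ 1`). -/
def shulgaC (α : ℝ) (n : ℕ) : ℕ := ((shulgaList α n).getLast?.getD (0, 0)).2

/-- The first `n` steps of Shulga's algorithm applied to `α` are defined: for each step
`k + 1 ≤ n`, the partial quotients `a_{k+1}(α - [0;c₁,…,c_k])` and
`a_{k+1}(α - [0;b₁,…,b_{k+1}])` defining `b_{k+1}` and `c_{k+1}` exist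
(in particular the algorithm has not stopped before step `n`). -/
def shulgaDefined (α : ℝ) (n : ℕ) : Prop :=
  ∀ k < n, pqDefined (α - cf (cList α k)) (k + 1) ∧
    pqDefined (α - cf (bList α (k + 1))) (k + 1)

/-- The half-open interval whose included endpoint is `x` and excluded endpoint is `y`,
the smaller one being the left endpoint. -/
def hIco (x y : ℝ) : Set ℝ := if x ≤ y then Set.Ico x y else Set.Ioc y x

/-- The list `[a 1, …, a n]`. -/
def listOf (a : ℕ → ℕ) (n : ℕ) : List ℕ := (List.range n).map fun i => a (i + 1)

/-- The interval `B_k` determined by the digits `b`, `c` (`k ≥ 1`). -/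
def Bset (b c : ℕ → ℕ) (k : ℕ) : Set ℝ :=
  hIco (cf (listOf b (k - 1) ++ [b k - 1]) + cf (listOf c (k - 1)))
    (cf (listOf b k) + cf (listOf c (k - 1)))

/-- The interval `C_k` determined by the digits `b`, `c` (`k ≥ 1`). -/
def Cset (b c : ℕ → ℕ) (k : ℕ) : Set ℝ :=
  hIco (cf (listOf c k) + cf (listOf b k))
    (cf (listOf c (k - 1) ++ [c k + 1]) + cf (listOf b k))

/-- `A₀ = [0,1]` and `Aₙ = ⋂_{k=1}^{n} (B_k ∩ C_k)` for `n ≥ 1`. -/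
def Aset (b c : ℕ → ℕ) : ℕ → Set ℝ
  | 0 => Set.Icc 0 1
  | n + 1 => ⋂ k ∈ Finset.Icc 1 (n + 1), (Bset b c k ∩ Cset b c k)

/-- The denominators of the convergents of `[0; a 1, a 2, …]`:
`q₀ = 1`, `q₁ = a 1`, `q_k = a k * q_{k-1} + q_{k-2}`. -/
def qden (a : ℕ → ℕ) : ℕ → ℕ
  | 0 => 1
  | 1 => a 1
  | n + 2 => a (n + 2) * qden a (n + 1) + qden a n

/-! ### Finite continued fractions with a real tail -/

/-- The value of `[0; a₁, …, aₙ + y]`; for the empty list this is `y`. -/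
def cft : List ℕ → ℝ → ℝ
  | [], y => y
  | a :: l, y => 1 / ((a : ℝ) + cft l y)

lemma cft_zero (l : List ℕ) : cft l 0 = cf l := by
  induction l with
  | nil => rfl
  | cons a l ih => simp [cft, cf, ih]

lemma cft_append (l : List ℕ) (a : ℕ) (y : ℝ) :
    cft (l ++ [a]) y = cft l (1 / ((a : ℝ) + y)) := by
  induction l with
  | nil => rfl
  | cons b l ih => simp [cft, ih]

lemma cft_mem (l : List ℕ) (hl : ∀ a ∈ l, 2 ≤ a) (y : ℝ) (h0 : 0 ≤ y) (h1 : y < 1) :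
    0 ≤ cft l y ∧ cft l y < 1 := by
  induction l with
  | nil => exact ⟨h0, h1⟩
  | cons a l ih =>
    obtain ⟨i0, -⟩ := ih fun x hx => hl x (by simp [hx])
    have ha : (2 : ℝ) ≤ a := by exact_mod_cast hl a (by simp)
    refine ⟨by simp only [cft]; positivity, ?_⟩
    simp only [cft]
    rw [div_lt_one (by linarith)]
    linarith

lemma gaussIter_succ' (x : ℝ) (n : ℕ) :
    gaussIter x (n + 1) = gaussIter (1 / Int.fract x) n := by
  induction n with
  | zero => rfl
  | succ n ih => rw [gaussIter, ih, gaussIter]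

lemma gaussIter_nat_add (a : ℕ) (x : ℝ) (n : ℕ) :
    gaussIter ((a : ℝ) + x) n = gaussIter x n := by
  induction n with
  | zero => simp [gaussIter]
  | succ n ih => rw [gaussIter, ih, gaussIter]

/-- The Gauss map strips the digits off one by one. Digits at least `2` keep all tails away
from `1`, whose fractional part would vanish. -/
lemma gaussIter_cft (l : List ℕ) (hl : ∀ a ∈ l, 2 ≤ a) (y : ℝ) (h0 : 0 ≤ y) (h1 : y < 1) :
    gaussIter (cft l y) l.length = y := by
  induction l with
  | nil => exact Int.fract_eq_self.2 ⟨h0, h1⟩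
  | cons a l ih =>
    have hm := cft_mem (a :: l) hl y h0 h1
    rw [List.length_cons, gaussIter_succ', Int.fract_eq_self.2 hm]
    simp only [cft, one_div_one_div]
    rw [gaussIter_nat_add]
    exact ih fun x hx => hl x (by simp [hx])

/-- Denominators of the convergents with the index shifted by one: `den a (n + 1)` is the
denominator of `[0; a 1, …, a n]`, and `den a 0 = 0` is the conventional `q₋₁`. -/
def den (a : ℕ → ℕ) : ℕ → ℝ
  | 0 => 0
  | 1 => 1
  | n + 2 => a (n + 1) * den a (n + 1) + den a n

/-- Numerators of the convergents, with the same shift of index as in `den`. -/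
def num (a : ℕ → ℕ) : ℕ → ℝ
  | 0 => 1
  | 1 => 0
  | n + 2 => a (n + 1) * num a (n + 1) + num a n

lemma num_den_det (a : ℕ → ℕ) (n : ℕ) :
    num a n * den a (n + 1) - num a (n + 1) * den a n = (-1) ^ n := by
  induction n with
  | zero => simp [num, den]
  | succ n ih => rw [pow_succ, ← ih, num, den]; ring

lemma den_pos (a : ℕ → ℕ) (n : ℕ) (h : ∀ k, 1 ≤ k → k ≤ n → 2 ≤ a k) :
    0 ≤ den a n ∧ 0 < den a (n + 1) := by
  induction n with
  | zero => simp [den]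
  | succ n ih =>
    obtain ⟨h0, h1⟩ := ih fun k hk hk' => h k hk (by omega)
    have : (2 : ℝ) ≤ a (n + 1) := by exact_mod_cast h (n + 1) (by omega) le_rfl
    refine ⟨h1.le, ?_⟩
    rw [den]
    positivity

lemma listOf_succ (a : ℕ → ℕ) (n : ℕ) : listOf a (n + 1) = listOf a n ++ [a (n + 1)] := by
  simp [listOf, List.range_succ]

lemma listOf_mem (a : ℕ → ℕ) (n : ℕ) (h : ∀ k, 1 ≤ k → k ≤ n → 2 ≤ a k) :
    ∀ x ∈ listOf a n, 2 ≤ x := by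
  intro x hx
  simp only [listOf, List.mem_map, List.mem_range] at hx
  obtain ⟨i, hi, rfl⟩ := hx
  exact h (i + 1) (by omega) (by omega)

lemma listOf_length (a : ℕ → ℕ) (n : ℕ) : (listOf a n).length = n := by simp [listOf]

lemma cft_eq (a : ℕ → ℕ) (n : ℕ) (h : ∀ k, 1 ≤ k → k ≤ n → 2 ≤ a k) (y : ℝ) (hy : 0 ≤ y) :
    cft (listOf a n) y = (num a (n + 1) + y * num a n) / (den a (n + 1) + y * den a n) := by
  induction n generalizing y with
  | zero => simp [listOf, cft, num, den]
  | succ n ih =>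
    have h' : ∀ k, 1 ≤ k → k ≤ n → 2 ≤ a k := fun k hk hk' => h k hk (by omega)
    obtain ⟨h0, h1⟩ := den_pos a n h'
    have ha : (2 : ℝ) ≤ a (n + 1) := by exact_mod_cast h (n + 1) (by omega) le_rfl
    have hay : (0 : ℝ) < a (n + 1) + y := by linarith
    rw [listOf_succ, cft_append, ih h' _ (by positivity), num, den]
    have e1 : den a (n + 1) + 1 / ((a (n + 1) : ℝ) + y) * den a n ≠ 0 := by positivity
    have e2 : (a (n + 1) : ℝ) * den a (n + 1) + den a n + y * den a (n + 1) ≠ 0 := by positivity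
    rw [div_eq_div_iff e1 e2]
    field_simp
    ring

/-- Consecutive convergents differ by `± 1 / (qₙ qₙ₊₁)`. -/
lemma cf_succ (a : ℕ → ℕ) (n : ℕ) (h : ∀ k, 1 ≤ k → k ≤ n + 1 → 2 ≤ a k) :
    cf (listOf a (n + 1)) =
      cf (listOf a n) + (-1) ^ n * (1 / (den a (n + 1) * den a (n + 2))) := by
  have h' : ∀ k, 1 ≤ k → k ≤ n → 2 ≤ a k := fun k hk hk' => h k hk (by omega)
  have p1 := (den_pos a n h').2
  have p2 := (den_pos a (n + 1) h).2
  rw [← cft_zero, ← cft_zero, cft_eq a (n + 1) h 0 le_rfl, cft_eq a n h' 0 le_rfl,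
    ← num_den_det a n]
  simp only [zero_mul, add_zero]
  rw [show n + 1 + 1 = n + 2 from rfl] at *
  field_simp
  rw [num, den]
  ring

/-- A number at signed distance `(-1)ⁿ δ` from `[0; a₁, …, aₙ]`, with `δ` below the length of the
cylinder of `a₁, …, aₙ`, starts with the digits `a₁, …, aₙ`, and its tail is explicit in `δ`. -/
lemma gaussIter_near (a : ℕ → ℕ) (n : ℕ) (h : ∀ k, 1 ≤ k → k ≤ n → 2 ≤ a k) (δ : ℝ)
    (h0 : 0 ≤ δ) (h1 : δ * (den a (n + 1) * (den a (n + 1) + den a n)) < 1) :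
    gaussIter (cf (listOf a n) + (-1) ^ n * δ) n =
      δ * den a (n + 1) ^ 2 / (1 - δ * (den a (n + 1) * den a n)) := by
  obtain ⟨v0, v1⟩ := den_pos a n h
  have hdet := num_den_det a n
  set v := den a (n + 1) with hv
  set v' := den a n with hv'
  set u := num a (n + 1) with hu
  set u' := num a n with hu'
  have hw : 0 < 1 - δ * (v * v') := by nlinarith [mul_nonneg h0 (mul_pos v1 v1).le]
  have hw' := hw.ne'
  have hy0 : 0 ≤ δ * v ^ 2 / (1 - δ * (v * v')) := by positivity
  have hy1 : δ * v ^ 2 / (1 - δ * (v * v')) < 1 := by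
    rw [div_lt_one hw]; nlinarith
  have key : cf (listOf a n) + (-1) ^ n * δ = cft (listOf a n) (δ * v ^ 2 / (1 - δ * (v * v'))) := by
    rw [← cft_zero, cft_eq a n h 0 le_rfl, cft_eq a n h _ hy0, ← hv, ← hv', ← hu, ← hu', ← hdet]
    obtain ⟨w, hw_def⟩ : ∃ w, w = 1 - δ * (v * v') := ⟨_, rfl⟩
    rw [← hw_def] at hw' ⊢
    have e : v + δ * v ^ 2 / w * v' = v / w := by
      field_simp
      rw [hw_def]
      ring
    rw [e]
    simp only [zero_mul, add_zero]
    field_simp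
    rw [hw_def]
    ring
  rw [key]
  have := gaussIter_cft (listOf a n) (listOf_mem a n h) _ hy0 hy1
  rwa [listOf_length] at this

/-- The next partial quotient `k` is the largest integer with `δ v (k v + v') ≤ 1`. -/
lemma pq_near (a : ℕ → ℕ) (n : ℕ) (h : ∀ k, 1 ≤ k → k ≤ n → 2 ≤ a k) (δ : ℝ)
    (h0 : 0 < δ) (h1 : δ * (den a (n + 1) * (den a (n + 1) + den a n)) < 1) (k : ℕ)
    (hk : k = pq (cf (listOf a n) + (-1) ^ n * δ) (n + 1)) :
    1 ≤ k ∧ δ * (den a (n + 1) * (k * den a (n + 1) + den a n)) ≤ 1 ∧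
      1 < δ * (den a (n + 1) * ((k + 1) * den a (n + 1) + den a n)) := by
  obtain ⟨v0, v1⟩ := den_pos a n h
  rw [pq, Nat.add_sub_cancel, gaussIter_near a n h δ h0.le h1] at hk
  set v := den a (n + 1)
  set v' := den a n
  have hw : 0 < 1 - δ * (v * v') := by nlinarith [mul_pos h0 (mul_pos v1 v1)]
  have hd : 0 < δ * v ^ 2 := by positivity
  rw [one_div_div] at hk
  have l1 : (k : ℝ) ≤ (1 - δ * (v * v')) / (δ * v ^ 2) := by
    rw [hk]; exact Nat.floor_le (by positivity)
  have l2 : (1 - δ * (v * v')) / (δ * v ^ 2) < k + 1 := by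
    rw [hk]; exact Nat.lt_floor_add_one _
  rw [le_div_iff₀ hd] at l1
  rw [div_lt_iff₀ hd] at l2
  refine ⟨?_, by nlinarith, by nlinarith⟩
  rcases Nat.eq_zero_or_pos k with rfl | hk'
  · exfalso
    simp only [Nat.cast_zero, zero_add, one_mul] at l2
    nlinarith
  · exact hk'

/-! ### Running the algorithm -/

lemma shulgaB_succ (α : ℝ) (n : ℕ) :
    shulgaB α (n + 1) = pq (α - cf (cList α n)) (n + 1) + 1 := by
  simp [shulgaB, shulgaList, cList]

lemma bList_succ (α : ℝ) (n : ℕ) : bList α (n + 1) = bList α n ++ [shulgaB α (n + 1)] := by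
  rw [shulgaB_succ]
  simp [bList, shulgaList, cList]

lemma shulgaC_succ (α : ℝ) (n : ℕ) :
    shulgaC α (n + 1) = pq (α - cf (bList α (n + 1))) (n + 1) := by
  rw [bList_succ, shulgaB_succ]
  simp [shulgaC, shulgaList, cList, bList]

lemma cList_succ (α : ℝ) (n : ℕ) : cList α (n + 1) = cList α n ++ [shulgaC α (n + 1)] := by
  rw [shulgaC_succ, bList_succ, shulgaB_succ]
  simp [bList, shulgaList, cList]

lemma bList_eq (α : ℝ) (n : ℕ) : bList α n = listOf (shulgaB α) n := by
  induction n with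
  | zero => rfl
  | succ n ih => rw [bList_succ, listOf_succ, ih]

lemma cList_eq (α : ℝ) (n : ℕ) : cList α n = listOf (shulgaC α) n := by
  induction n with
  | zero => rfl
  | succ n ih => rw [cList_succ, listOf_succ, ih]

/-- The situation after `n` steps of the algorithm: all digits are at least `2`, the denominators
on the `c` side dominate those on the `b` side, and the error of the approximation has sign
`(-1)ⁿ` and size below `1 / (qₙ (qₙ + qₙ₋₁))`, `qₙ` being the denominators on the `c` side. -/
structure ShulgaInv (α : ℝ) (n : ℕ) : Prop where
  hb : ∀ k, 1 ≤ k → k ≤ n → 2 ≤ shulgaB α k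
  hc : ∀ k, 1 ≤ k → k ≤ n → 2 ≤ shulgaC α k
  le : den (shulgaB α) (n + 1) ≤ den (shulgaC α) (n + 1)
  le' : den (shulgaB α) n ≤ den (shulgaC α) n
  err : ∃ δ : ℝ, 0 ≤ δ ∧
    δ * (den (shulgaC α) (n + 1) * (den (shulgaC α) (n + 1) + den (shulgaC α) n)) < 1 ∧
    α = cf (bList α n) + cf (cList α n) + (-1) ^ n * δ

/-- The inequalities between consecutive denominators `p', p, P` (on the `b` side) and `q', q, Q`
(on the `c` side) that one step of the algorithm leaves behind. -/
structure StepIneq (p p' P q q' Q : ℝ) : Prop where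
  i1 : q * (q + q') < p * P
  i3 : (q + q') * (p * P) < (Q + q) * (p * P - q * (q + q'))
  i2 : P * (P - p) < q * (Q + q)

/-- The inequalities of `StepIneq` follow from the choice of the two digits: `δ` is the error
before the step and `δ - 1 / (p P)` the error after the new `b`-digit.
The hypotheses `h2`, `h3` express the choice of the `b`-digit, and `h4` that of the `c`-digit. -/
lemma stepIneq_of {p p' P q q' Q δ : ℝ} (hp : 0 < p) (hq : 0 < q) (hq' : 0 ≤ q')
    (hpP : p < P) (hQ : 0 < Q) (hδ : 0 < δ) (h1 : δ * (q * (q + q')) < 1)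
    (h2 : δ * (p * (P - p)) ≤ 1) (h3 : 1 < δ * (p * P))
    (h4 : 1 < (δ - 1 / (p * P)) * (q * (Q + q))) : StepIneq p p' P q q' Q := by
  have hP : 0 < P := hp.trans hpP
  have hd : 0 < P - p := by linarith
  have hpPpos : 0 < p * P := mul_pos hp hP
  have i1 : q * (q + q') < p * P := by
    by_contra hcon
    push Not at hcon
    nlinarith [mul_le_mul_of_nonneg_left hcon hδ.le]
  -- cleared of denominators: `pP < (δpP - 1) q (Q + q)`
  have h4' : p * P < (δ * (p * P) - 1) * (q * (Q + q)) := by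
    have e : (δ - 1 / (p * P)) * (q * (Q + q)) * (p * P) =
        (δ * (p * P) - 1) * (q * (Q + q)) := by field_simp
    rw [← e]
    nlinarith
  have hW : 0 < q * (Q + q) := by positivity
  refine ⟨i1, ?_, ?_⟩
  swap
  · have a1 : (δ * (p * P) - 1) * (P - p) ≤ p := by nlinarith
    have a2 : p * P * (P - p) < p * (q * (Q + q)) := by
      nlinarith [mul_lt_mul_of_pos_right h4' hd, mul_le_mul_of_nonneg_right a1 hW.le]
    have a3 : p * (P * (P - p)) < p * (q * (Q + q)) := by linarith
    exact lt_of_mul_lt_mul_left a3 hp.le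
  · have hA : 0 < q * (q + q') := by positivity
    have a1 : (δ * (p * P) - 1) * (q * (q + q')) < p * P - q * (q + q') := by nlinarith
    have a2 : q * ((q + q') * (p * P)) < q * ((Q + q) * (p * P - q * (q + q'))) := by
      nlinarith [mul_lt_mul_of_pos_right h4' hA, mul_lt_mul_of_pos_right a1 hW]
    exact lt_of_mul_lt_mul_left a2 hq.le

/-- `Q / q` exceeds `P / p` in the form `(Q + q) / P > (q + q') / p`. -/
lemma StepIneq.ratio {p p' P q q' Q : ℝ} (h : StepIneq p p' P q q' Q) (hp : 0 < p) (hq : 0 < q)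
    (hpP : p < P) (hQ : 0 < Q) : P * (q + q') < p * (Q + q) := by
  have hP : 0 < P := hp.trans hpP
  rcases le_or_gt (q * (q + q')) (p * (P - p)) with hA | hA
  · have : q * (P * (q + q')) < q * (p * (Q + q)) := by
      nlinarith [mul_le_mul_of_nonneg_left hA hP.le, mul_lt_mul_of_pos_left h.i2 hp]
    exact lt_of_mul_lt_mul_left this hq.le
  · have hQq : 0 < Q + q := by linarith
    have h3 := h.i3
    have : p * (P * (q + q')) < p * (p * (Q + q)) := by
      nlinarith [mul_lt_mul_of_pos_left hA hQq]
    exact lt_of_mul_lt_mul_left this hp.le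

lemma shulga_step (α : ℝ) (n : ℕ) (hI : ShulgaInv α n)
    (hdef : pqDefined (α - cf (cList α n)) (n + 1)) :
    ShulgaInv α (n + 1) ∧ StepIneq (den (shulgaB α) (n + 1)) (den (shulgaB α) n)
      (den (shulgaB α) (n + 2)) (den (shulgaC α) (n + 1)) (den (shulgaC α) n)
      (den (shulgaC α) (n + 2)) := by
  obtain ⟨hb, hc, hle, hle', δ, h0, h1, hα⟩ := hI
  obtain ⟨hp', hp⟩ := den_pos _ n hb
  obtain ⟨hq', hq⟩ := den_pos _ n hc
  have ePden : den (shulgaB α) (n + 2) =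
    shulgaB α (n + 1) * den (shulgaB α) (n + 1) + den (shulgaB α) n := rfl
  have eQden : den (shulgaC α) (n + 2) =
    shulgaC α (n + 1) * den (shulgaC α) (n + 1) + den (shulgaC α) n := rfl
  have h1b : δ * (den (shulgaB α) (n + 1) * (den (shulgaB α) (n + 1) + den (shulgaB α) n)) < 1 := by
    refine lt_of_le_of_lt ?_ h1
    gcongr
  have ex : α - cf (cList α n) = cf (listOf (shulgaB α) n) + (-1) ^ n * δ := by
    rw [← bList_eq]; linarith
  have hδ : 0 < δ := by
    rcases h0.lt_or_eq with h | h
    · exact h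
    · exfalso
      apply hdef
      rw [ex, Nat.add_sub_cancel, gaussIter_near _ n hb δ h0 h1b, ← h]
      simp
  obtain ⟨k1, k2, k3⟩ := pq_near (shulgaB α) n hb δ hδ h1b _ rfl
  rw [← ex] at k1 k2 k3
  have hbk := shulgaB_succ α n
  have hb2 : 2 ≤ shulgaB α (n + 1) := by omega
  have hbkr : (shulgaB α (n + 1) : ℝ) = pq (α - cf (cList α n)) (n + 1) + 1 := by
    rw [hbk]; push_cast; ring
  have hb2r : (2 : ℝ) ≤ shulgaB α (n + 1) := by exact_mod_cast hb2
  rw [← hbkr, ← ePden] at k3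
  have k2' : δ * (den (shulgaB α) (n + 1) *
      (den (shulgaB α) (n + 2) - den (shulgaB α) (n + 1))) ≤ 1 := by
    refine le_trans (le_of_eq ?_) k2
    rw [ePden, hbkr]; ring
  have hb' : ∀ k, 1 ≤ k → k ≤ n + 1 → 2 ≤ shulgaB α k := by
    intro k hk hk'
    rcases Nat.lt_or_ge n k with h | h
    · obtain rfl : k = n + 1 := by omega
      exact hb2
    · exact hb k hk h
  have hpP : den (shulgaB α) (n + 1) < den (shulgaB α) (n + 2) := by rw [ePden]; nlinarith
  have hP : 0 < den (shulgaB α) (n + 2) := hp.trans hpP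
  have hBs := cf_succ (shulgaB α) n hb'
  obtain ⟨δ', hδ'⟩ : ∃ δ', δ' = δ - 1 / (den (shulgaB α) (n + 1) * den (shulgaB α) (n + 2)) :=
    ⟨_, rfl⟩
  have hpos : 0 < 1 / (den (shulgaB α) (n + 1) * den (shulgaB α) (n + 2)) := by positivity
  have hδ'0 : 0 < δ' := by
    rw [hδ', sub_pos, div_lt_iff₀ (by positivity)]
    exact k3
  have h1c : δ' * (den (shulgaC α) (n + 1) * (den (shulgaC α) (n + 1) + den (shulgaC α) n)) < 1 := by
    refine lt_of_le_of_lt ?_ h1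
    gcongr
    linarith
  have ex' : α - cf (bList α (n + 1)) = cf (listOf (shulgaC α) n) + (-1) ^ n * δ' := by
    rw [← cList_eq, bList_eq, hBs, hδ', ← bList_eq]; linear_combination hα
  obtain ⟨m1, m2, m3⟩ := pq_near (shulgaC α) n hc δ' hδ'0 h1c _ rfl
  rw [← ex', ← shulgaC_succ] at m1 m2 m3
  rw [← eQden] at m2
  have m3' : 1 < δ' * (den (shulgaC α) (n + 1) *
      (den (shulgaC α) (n + 2) + den (shulgaC α) (n + 1))) := by
    refine lt_of_lt_of_eq m3 ?_
    rw [eQden]; ring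
  have hc1r : (1 : ℝ) ≤ shulgaC α (n + 1) := by exact_mod_cast m1
  have hQ : 0 < den (shulgaC α) (n + 2) := by rw [eQden]; positivity
  have hS : StepIneq (den (shulgaB α) (n + 1)) (den (shulgaB α) n)
      (den (shulgaB α) (n + 2)) (den (shulgaC α) (n + 1)) (den (shulgaC α) n)
      (den (shulgaC α) (n + 2)) :=
    stepIneq_of hp hq hq' hpP hQ hδ h1 k2' k3 (by rw [← hδ']; exact m3')
  have hcb : shulgaB α (n + 1) ≤ shulgaC α (n + 1) := by
    by_contra hcon
    have hcon' : (shulgaC α (n + 1) : ℝ) + 1 ≤ shulgaB α (n + 1) := by exact_mod_cast (by omega)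
    have hr := hS.ratio hp hq hpP hQ
    rw [ePden, eQden] at hr
    have e1 := mul_le_mul_of_nonneg_right hcon' (mul_pos hp hq).le
    have e2 := mul_nonneg (sub_nonneg.2 hb2r) (mul_nonneg hp.le hq')
    nlinarith [mul_nonneg hp' hq.le, mul_nonneg hp' hq', mul_nonneg hp.le hq']
  have hc' : ∀ k, 1 ≤ k → k ≤ n + 1 → 2 ≤ shulgaC α k := by
    intro k hk hk'
    rcases Nat.lt_or_ge n k with h | h
    · obtain rfl : k = n + 1 := by omega
      omega
    · exact hc k hk h
  have hCs := cf_succ (shulgaC α) n hc'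
  refine ⟨⟨hb', hc', ?_, hle, 1 / (den (shulgaC α) (n + 1) * den (shulgaC α) (n + 2)) - δ',
    ?_, ?_, ?_⟩, hS⟩
  · change den (shulgaB α) (n + 2) ≤ den (shulgaC α) (n + 2)
    have : (shulgaB α (n + 1) : ℝ) ≤ shulgaC α (n + 1) := by exact_mod_cast hcb
    rw [ePden, eQden]
    gcongr
  · rw [sub_nonneg, le_div_iff₀ (by positivity)]
    exact m2
  · change (_ - δ') * (den (shulgaC α) (n + 2) *
      (den (shulgaC α) (n + 2) + den (shulgaC α) (n + 1))) < 1
    set q := den (shulgaC α) (n + 1)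
    set Q := den (shulgaC α) (n + 2)
    have e : (1 / (q * Q) - δ') * (Q * (Q + q)) = (Q + q - Q * (δ' * (q * (Q + q)))) / q := by
      field_simp
    rw [e, div_lt_one hq]
    nlinarith
  · have e1 : cf (cList α (n + 1)) = cf (cList α n) +
        (-1) ^ n * (1 / (den (shulgaC α) (n + 1) * den (shulgaC α) (n + 2))) := by
      rw [cList_eq, cList_eq, hCs]
    rw [← cList_eq] at ex'
    rw [e1, pow_succ]
    linear_combination ex'

lemma shulgaInv_of_defined (α : ℝ) (h0 : 0 ≤ α) (h1 : α < 1) (n : ℕ)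
    (hdef : ∀ k < n, pqDefined (α - cf (cList α k)) (k + 1)) : ShulgaInv α n := by
  induction n with
  | zero =>
    refine ⟨fun k _ _ => by omega, fun k _ _ => by omega, le_rfl, le_rfl, α, h0, ?_, ?_⟩
    · simpa [den] using h1
    · simp [bList, cList, shulgaList, cf]
  | succ n ih =>
    exact (shulga_step α n (ih fun k hk => hdef k (by omega)) (hdef n (by omega))).1

/-! ### Consequences of the inequalities -/

/-- The last hypothesis is the inequality `StepIneq.i2` of the preceding step. -/
lemma c_ge_succ_b {p p' P q q' Q : ℝ} {b c : ℕ} (h : StepIneq p p' P q q' Q)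
    (hp : 0 < p) (hq : 0 < q) (hp' : 0 ≤ p') (hq' : 0 < q') (hb : 2 ≤ b)
    (hP : P = b * p + p') (hQ : Q = c * q + q')
    (hprev : p * (p - p') < q' * (q + q')) : b + 1 ≤ c := by
  by_contra hcon
  have hcb : (c : ℝ) ≤ b := by exact_mod_cast (by omega : c ≤ b)
  have hbr : (2 : ℝ) ≤ b := by exact_mod_cast hb
  have hpP : p < P := by rw [hP]; nlinarith
  have hQ0 : 0 < Q := by rw [hQ]; positivity
  have hQle : Q ≤ b * q + q' := by rw [hQ]; gcongr
  rcases le_or_gt (q * (p - p')) (q' * (P - p)) with hcrit | hcrit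
  · have hr := h.ratio hp hq hpP hQ0
    have := mul_le_mul_of_nonneg_left hQle hp.le
    rw [hP] at hr hcrit
    nlinarith
  · have h3 := h.i3
    have hX : 0 < p * P - q * (q + q') := by linarith [h.i1]
    have e1 : q * (((b + 1) * q + q') * (q + q')) < q * (b * (p * P)) := by
      have := mul_le_mul_of_nonneg_right (add_le_add_left hQle q) hX.le
      nlinarith
    have e1' := lt_of_mul_lt_mul_left e1 hq.le
    have e2 : p * (b * P * q') ≤ p * (((b + 1) * q + q') * (p - p')) := by
      refine mul_le_mul_of_nonneg_left ?_ hp.le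
      rw [hP] at hcrit ⊢
      nlinarith
    have e3 : ((b + 1) * q + q') * (p * (p - p')) < ((b + 1) * q + q') * (q' * (q + q')) :=
      mul_lt_mul_of_pos_left hprev (by positivity)
    have e4 := mul_lt_mul_of_pos_left e1' hq'
    nlinarith

/-- Combination of `StepIneq.i2` with `StepIneq.i1` for the following step. -/
lemma next_b_bound {p P q Q P2 : ℝ} (hP : 0 < P) (hQ : 0 < Q) (hq : 0 < q)
    (h2 : P * (P - p) < q * (Q + q)) (h1 : Q * (Q + q) < P * P2) : Q * (P - p) < q * P2 := by
  have : P * (Q * (P - p)) < P * (q * P2) := by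
    nlinarith [mul_lt_mul_of_pos_left h2 hQ, mul_lt_mul_of_pos_left h1 hq]
  exact lt_of_mul_lt_mul_left this hP.le

lemma b_mono_arith {p p' P q q' Q P2 : ℝ} {b c b2 : ℕ} (hp : 0 < p) (hq : 0 < q) (hp' : 0 ≤ p')
    (hq' : 0 ≤ q') (hb : 2 ≤ b) (hP : P = b * p + p') (hQ : Q = c * q + q')
    (hP2 : P2 = b2 * P + p) (hc : b + 1 ≤ c) (hn : Q * (P - p) < q * P2) : b ≤ b2 := by
  by_contra hcon
  have h1 : (b2 : ℝ) + 1 ≤ b := by exact_mod_cast (by omega)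
  have hbr : (2 : ℝ) ≤ b := by exact_mod_cast hb
  have hcr : (b : ℝ) + 1 ≤ c := by exact_mod_cast hc
  have hpP : p < P := by rw [hP]; nlinarith
  have hQge : (b + 1) * q ≤ Q := by rw [hQ]; nlinarith
  have e1 : q * ((b + 1) * (P - p)) < q * ((b - 1) * P + p) := by
    have a1 := mul_le_mul_of_nonneg_right hQge (sub_pos.2 hpP).le
    have a2 : q * P2 ≤ q * ((b - 1) * P + p) := by
      rw [hP2]
      refine mul_le_mul_of_nonneg_left ?_ hq.le
      nlinarith
    nlinarith
  have e2 := lt_of_mul_lt_mul_left e1 hq.le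
  rw [hP] at e2
  nlinarith

/-- The case of two equal consecutive digits `b ≥ 3` (encoded by `b * p' ≤ p`), preceded by a
`c`-digit at least `b + 1` (encoded by `(b + 1) * q' ≤ q`). -/
lemma b_strict_arith {p p' P q q' Q P2 : ℝ} {b c b2 : ℕ} (h : StepIneq p p' P q q' Q)
    (hp : 0 < p) (hq : 0 < q) (hp' : 0 < p') (hq' : 0 < q') (hb : 3 ≤ b)
    (hP : P = b * p + p') (hQ : Q = c * q + q') (hP2 : P2 = b2 * P + p)
    (hprev : p * (p - p') < q' * (q + q')) (hpp : b * p' ≤ p) (hqq : (b + 1) * q' ≤ q)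
    (hn : Q * (P - p) < q * P2) : b + 1 ≤ b2 := by
  have hbr : (3 : ℝ) ≤ b := by exact_mod_cast hb
  have hpP : p < P := by rw [hP]; nlinarith
  have hc : b + 2 ≤ c := by
    by_contra hcon
    have hcb : (c : ℝ) ≤ b + 1 := by exact_mod_cast (by omega : c ≤ b + 1)
    have hQle : Q ≤ (b + 1) * q + q' := by rw [hQ]; gcongr
    have h3 := h.i3
    have hX : 0 < p * P - q * (q + q') := by linarith [h.i1]
    have e1 : q * (((b + 2) * q + q') * (q + q')) < q * ((b + 1) * (p * P)) := by
      have := mul_le_mul_of_nonneg_right (add_le_add_left hQle q) hX.le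
      nlinarith
    have e1' := lt_of_mul_lt_mul_left e1 hq.le
    have e2 : ((b + 2) * (b + 1) + 1) * (q' * (q + q')) ≤ ((b + 2) * q + q') * (q + q') := by
      have : ((b + 2) * (b + 1) + 1) * q' ≤ (b + 2) * q + q' := by nlinarith
      nlinarith [mul_le_mul_of_nonneg_right this (by positivity : 0 ≤ q + q')]
    have e3 : ((b + 2) * (b + 1) + 1) * (p * (p - p')) < ((b + 2) * (b + 1) + 1) * (q' * (q + q')) :=
      mul_lt_mul_of_pos_left hprev (by positivity)
    have e4 : p * (((b + 2) * (b + 1) + 1) * (p - p')) < p * ((b + 1) * P) := by linarith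
    have e5 := lt_of_mul_lt_mul_left e4 hp.le
    rw [hP] at e5
    -- `e5` says `(2 b + 3) p < (b + 2) ^ 2 p'`, which contradicts `b p' ≤ p`
    nlinarith [mul_le_mul_of_nonneg_left hpp (by positivity : (0 : ℝ) ≤ 2 * b + 3),
      mul_nonneg (mul_nonneg (sub_nonneg.2 hbr) (by positivity : (0 : ℝ) ≤ b + 2)) hp'.le]
  by_contra hcon
  have h1 : (b2 : ℝ) ≤ b := by exact_mod_cast (by omega : b2 ≤ b)
  have hcr : (b : ℝ) + 2 ≤ c := by exact_mod_cast hc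
  have hQge : (b + 2) * q ≤ Q := by rw [hQ]; nlinarith
  have e1 : q * ((b + 2) * (P - p)) < q * (b * P + p) := by
    have a1 := mul_le_mul_of_nonneg_right hQge (sub_pos.2 hpP).le
    have a2 : q * P2 ≤ q * (b * P + p) := by
      rw [hP2]
      refine mul_le_mul_of_nonneg_left ?_ hq.le
      nlinarith
    nlinarith
  have e2 := lt_of_mul_lt_mul_left e1 hq.le
  rw [hP] at e2
  nlinarith

/-! ### Digit sequences subject to the inequalities -/

/-- The conditions on digit sequences `b`, `c` imposed by the first `N` steps of the algorithm. -/
structure DigitSystem (b c : ℕ → ℕ) (N : ℕ) : Prop where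
  hb : ∀ k, 1 ≤ k → k ≤ N → 2 ≤ b k
  hc : ∀ k, 1 ≤ k → k ≤ N → 2 ≤ c k
  step : ∀ n < N, StepIneq (den b (n + 1)) (den b n) (den b (n + 2))
    (den c (n + 1)) (den c n) (den c (n + 2))

variable {b c : ℕ → ℕ} {N : ℕ}

lemma DigitSystem.c_gt (h : DigitSystem b c N) (n : ℕ) (hn : n + 2 ≤ N) :
    b (n + 2) + 1 ≤ c (n + 2) := by
  obtain ⟨p0, p1⟩ := den_pos b (n + 1) fun k hk hk' => h.hb k hk (by omega)
  obtain ⟨-, q1⟩ := den_pos c (n + 1) fun k hk hk' => h.hc k hk (by omega)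
  obtain ⟨-, q0⟩ := den_pos c n fun k hk hk' => h.hc k hk (by omega)
  refine c_ge_succ_b (h.step (n + 1) (by omega)) p1 q1 p0 q0 (h.hb _ (by omega) hn) rfl rfl ?_
  have := (h.step n (by omega)).i2
  linarith

lemma DigitSystem.next (h : DigitSystem b c N) (n : ℕ) (hn : n + 2 ≤ N) :
    den c (n + 2) * (den b (n + 2) - den b (n + 1)) < den c (n + 1) * den b (n + 3) := by
  have P := (den_pos b (n + 1) fun k hk hk' => h.hb k hk (by omega)).2
  have Q := (den_pos c (n + 1) fun k hk hk' => h.hc k hk (by omega)).2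
  have q := (den_pos c n fun k hk hk' => h.hc k hk (by omega)).2
  exact next_b_bound P Q q (h.step n (by omega)).i2 (h.step (n + 1) (by omega)).i1

lemma DigitSystem.mono (h : DigitSystem b c N) (n : ℕ) (hn : n + 3 ≤ N) :
    b (n + 2) ≤ b (n + 3) := by
  obtain ⟨p0, p1⟩ := den_pos b (n + 1) fun k hk hk' => h.hb k hk (by omega)
  obtain ⟨q0, q1⟩ := den_pos c (n + 1) fun k hk hk' => h.hc k hk (by omega)
  exact b_mono_arith p1 q1 p0 q0 (h.hb _ (by omega) (by omega)) rfl rfl rfl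
    (h.c_gt n (by omega)) (h.next (n + 1) hn)

lemma DigitSystem.c_one (h : DigitSystem b c N) (hN : 1 ≤ N) :
    (b 1 : ℝ) * (b 1 - 1) < c 1 + 1 := by
  simpa [den] using (h.step 0 hN).i2

lemma DigitSystem.mono_one (h : DigitSystem b c N) (hN : 2 ≤ N) : b 1 ≤ b 2 := by
  by_contra hcon
  have b2 : (2 : ℝ) ≤ b 2 := by exact_mod_cast h.hb 2 (by omega) hN
  have h1 : (b 2 : ℝ) + 1 ≤ b 1 := by exact_mod_cast (by omega)
  have hc := h.c_one (by omega)
  have hc2 : (2 : ℝ) ≤ c 1 := by exact_mod_cast h.hc 1 le_rfl (by omega)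
  have hn : (c 1 : ℝ) * (b 1 - 1) < b 2 * b 1 + 1 := by simpa [den] using h.next 0 hN
  nlinarith

/-- If `b₁ = b₂ = 2`, the inequalities force `c₁ = 2`, then `c₂ ≥ 3` and `b₃ ≥ 3`. -/
lemma DigitSystem.three (h : DigitSystem b c N) (hN : 3 ≤ N) : 3 ≤ b 3 := by
  have m1 := h.mono_one (by omega)
  have m2 := h.mono 0 hN
  simp only [zero_add] at m2
  have b1 := h.hb 1 le_rfl (by omega)
  by_contra hcon
  have e1 : b 1 = 2 := by omega
  have e2 : b 2 = 2 := by omega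
  have e3 : b 3 = 2 := by omega
  have c2 : 3 ≤ c 2 := by have := h.c_gt 0 (by omega); simp only [zero_add] at this; omega
  have c1 := h.hc 1 le_rfl (by omega)
  have c1r : (2 : ℝ) ≤ c 1 := by exact_mod_cast c1
  have c2r : (3 : ℝ) ≤ c 2 := by exact_mod_cast c2
  have i1 := (h.step 2 (by omega)).i1
  simp only [den, e1, e2, e3, zero_add] at i1
  norm_num at i1
  have hprod : (6 : ℝ) ≤ c 2 * c 1 := by nlinarith
  nlinarith

lemma DigitSystem.ge_three (h : DigitSystem b c N) (n : ℕ) (hn : n + 3 ≤ N) : 3 ≤ b (n + 3) := by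
  induction n with
  | zero => exact h.three hn
  | succ n ih => exact (ih (by omega)).trans (h.mono (n + 1) (by omega))

lemma DigitSystem.main (h : DigitSystem b c N) (n : ℕ) (hn : n + 3 ≤ N) :
    b (n + 1) + 1 ≤ b (n + 3) := by
  have m2 := h.mono n hn
  have m1 : b (n + 1) ≤ b (n + 2) := by
    cases n with
    | zero => exact h.mono_one (by omega)
    | succ n => exact h.mono n (by omega)
  rcases m1.lt_or_eq with hlt | heq
  · omega
  have hb2 := h.hb (n + 2) (by omega) (by omega)
  rcases Nat.lt_or_ge (b (n + 2)) 3 with hb3 | hb3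
  · have := h.ge_three n hn
    omega
  have hc : b (n + 2) + 1 ≤ c (n + 1) := by
    cases n with
    | zero =>
      have h1 := h.c_one (by omega)
      simp only [zero_add] at heq hb3 ⊢
      have hr : (3 : ℝ) ≤ b 1 := by rw [heq]; exact_mod_cast hb3
      have : (b 1 : ℝ) < c 1 := by nlinarith
      have : b 1 < c 1 := by exact_mod_cast this
      omega
    | succ n =>
      rw [← heq]
      exact h.c_gt n (by omega)
  obtain ⟨-, p1⟩ := den_pos b (n + 1) fun k hk hk' => h.hb k hk (by omega)
  obtain ⟨-, q1⟩ := den_pos c (n + 1) fun k hk hk' => h.hc k hk (by omega)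
  obtain ⟨pp, p0⟩ := den_pos b n fun k hk hk' => h.hb k hk (by omega)
  obtain ⟨qq, q0⟩ := den_pos c n fun k hk hk' => h.hc k hk (by omega)
  have hcr : (b (n + 2) : ℝ) + 1 ≤ c (n + 1) := by exact_mod_cast hc
  rw [heq]
  refine b_strict_arith (h.step (n + 1) (by omega)) p1 q1 p0 q0 hb3 rfl rfl rfl ?_ ?_ ?_
    (h.next (n + 1) hn)
  · have := (h.step n (by omega)).i2
    linarith
  · rw [← heq, den]
    linarith
  · rw [den]
    nlinarith

/-- for `n ≥ 1`, the Shulga sequences satisfy `b_{n+2} ≥ bₙ + 1`. -/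
theorem stmt7 (α : ℝ) (hα : α ∈ Set.Icc (0 : ℝ) 1) (n : ℕ) (hn : 1 ≤ n)
    (hdef : shulgaDefined α (n + 2)) : shulgaB α n + 1 ≤ shulgaB α (n + 2) := by
  have hd : ∀ k < n + 2, pqDefined (α - cf (cList α k)) (k + 1) := fun k hk => (hdef k hk).1
  have h1 : α < 1 := by
    refine lt_of_le_of_ne hα.2 ?_
    rintro rfl
    -- `1` has no first partial quotient, its fractional part being `0`
    exact hd 0 (by omega) (by simp [gaussIter, cList, shulgaList, cf])
  have hI : ∀ m ≤ n + 2, ShulgaInv α m := fun m hm =>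
    shulgaInv_of_defined α hα.1 h1 m fun k hk => hd k (by omega)
  have hS : DigitSystem (shulgaB α) (shulgaC α) (n + 2) :=
    ⟨(hI _ le_rfl).hb, (hI _ le_rfl).hc, fun m hm => (shulga_step α m (hI m hm.le) (hd m hm)).2⟩
  obtain ⟨m, rfl⟩ : ∃ m, n = m + 1 := ⟨n - 1, by omega⟩
  exact hS.main m (by omega)

end ShulgaPaper
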